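/- arXiv:2407.09815 — 2 statements merged into one kernel-verified Lean document; each statement's English description precedes it below -/
import Mathlib

section
/- For every 1 < p ≤ ∞, every f ∈ ℓ^{p,1}(ℤ^d) and every j = 1,…,d, one has ‖∂_j f‖_{ℓ^{p,1}(ℤ^d)} ≤ C_p ‖f‖_{ℓ^{p,1}(ℤ^d)} for a constant C_p depending only on p and d. -/
/-!
Let `u b = (1 + b²)^{-1/2}` for `b ∈ ℤ` and `G m = |f m| ⟨m⟩`. The kernel `φⱼ` lives on the line
`ℤ eⱼ`, where `|φⱼ(b eⱼ)| ≤ 4 u(b)²`. For `m = k - b eⱼ` one has `⟨k⟩ ≤ ⟨m⟩ + |b|`, `u(b) |b| ≤ 1`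
and `1 ≤ u(mⱼ) ⟨m⟩`, hence
`⟨k⟩ |∂ⱼ f(k)| ≤ ∑_b 4 (u(b) + u(kⱼ - b)) · u(b) G(k - b eⱼ)`.

Take conjugate exponents `q`, `t` in `(1, ∞)`. The `ℓ^q` norm in `b` of the first factor is at most
`8 ‖u‖_q`, uniformly in `k`, so by Hölder's inequality only the `ℓ^p_k ℓ^t_b` norm of the second
factor is left. If `p < ∞`, choose `t = p`: by Tonelli and translation invariance this norm equals
`‖u‖_p ‖G‖_p`. If `p = ∞`, any `t` will do, with the bound `‖u‖_t ‖G‖_∞`. All these norms of `u`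
are finite because `q, t > 1`.
-/

open scoped BigOperators ENNReal NNReal
open MeasureTheory Filter

noncomputable section

/-- Kernel `φⱼ` of the discrete partial derivative on `ℤ^d`:
`φⱼ(m) = -4i/(π(4a²-1))` if `m = a·eⱼ`, and `0` otherwise. -/
def phi (d : ℕ) (j : Fin d) (m : Fin d → ℤ) : ℂ :=
  if ∀ i, i ≠ j → m i = 0 then
    (-4 * Complex.I) / ((Real.pi : ℂ) * (4 * (m j : ℂ) ^ 2 - 1))
  else 0

/-- Discrete convolution on `ℤ^d`. -/
def dconv {d : ℕ} (u v : (Fin d → ℤ) → ℂ) (k : Fin d → ℤ) : ℂ :=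
  ∑' m, u m * v (k - m)

/-- Discrete partial derivative `∂ⱼ u = u ∗ φⱼ`. -/
def pd {d : ℕ} (j : Fin d) (u : (Fin d → ℤ) → ℂ) : (Fin d → ℤ) → ℂ :=
  dconv u (phi d j)

/-- Japanese bracket `⟨m⟩ = (1+|m|²)^{1/2}`. -/
def jap {d : ℕ} (m : Fin d → ℤ) : ℝ :=
  Real.sqrt (1 + ∑ i, ((m i : ℝ)) ^ 2)

open scoped Classical in
/-- `ℓ^p` norm on `ℤ^d` (valued in `ℝ≥0∞`), `1 ≤ p ≤ ∞`. -/
def lpn {d : ℕ} (p : ℝ≥0∞) (f : (Fin d → ℤ) → ℂ) : ℝ≥0∞ :=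
  if p = ⊤ then ⨆ m, (‖f m‖₊ : ℝ≥0∞)
  else (∑' m, (‖f m‖₊ : ℝ≥0∞) ^ p.toReal) ^ (1 / p.toReal)

/-- Weighted `ℓ^{p,1}` norm: the `ℓ^p` norm of `m ↦ f(m)⟨m⟩`. -/
def wlp {d : ℕ} (p : ℝ≥0∞) (f : (Fin d → ℤ) → ℂ) : ℝ≥0∞ :=
  lpn p (fun m => f m * (jap m : ℂ))

section CountNorm

variable {𝕜 E F ι κ : Type*} [NormedField 𝕜] [NormedAddCommGroup E] [NormedSpace 𝕜 E]
  [NormedAddCommGroup F] {p q t : ℝ≥0∞}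

lemma eLpNorm_count_eq_tsum [MeasurableSpace ι] [MeasurableSingletonClass ι] {ε : Type*} [ENorm ε]
    (hp₀ : p ≠ 0) (hp : p ≠ ⊤) (f : ι → ε) :
    eLpNorm f p .count = (∑' i, ‖f i‖ₑ ^ p.toReal) ^ (1 / p.toReal) := by
  rw [eLpNorm_eq_lintegral_rpow_enorm_toReal hp₀ hp, lintegral_count]

lemma eLpNorm_count_const_mul [MeasurableSpace ι] [MeasurableSingletonClass ι] (c : ℝ≥0∞)
    (v : ι → ℝ≥0∞) : eLpNorm (fun i => c * v i) p .count = c * eLpNorm v p .count := by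
  rcases eq_or_ne p 0 with rfl | hp₀
  · simp only [eLpNorm_exponent_zero, mul_zero]
  rcases eq_or_ne p ⊤ with rfl | hp
  · simp only [eLpNorm_exponent_top, eLpNormEssSup_count, enorm_eq_self, ENNReal.mul_iSup]
  have hr : 0 < p.toReal := ENNReal.toReal_pos hp₀ hp
  simp only [eLpNorm_count_eq_tsum hp₀ hp, enorm_eq_self, ENNReal.mul_rpow_of_nonneg _ _ hr.le,
    ENNReal.tsum_mul_left]
  rw [ENNReal.mul_rpow_of_nonneg _ _ (by positivity), ← ENNReal.rpow_mul,
    mul_one_div_cancel hr.ne', ENNReal.rpow_one]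

lemma lpn_eq_eLpNorm_count {d : ℕ} (hp₀ : p ≠ 0) (f : (Fin d → ℤ) → ℂ) :
    lpn p f = eLpNorm f p .count := by
  unfold lpn
  split_ifs with hp
  · rw [hp, eLpNorm_exponent_top, eLpNormEssSup_count]
    rfl
  · rw [eLpNorm_count_eq_tsum hp₀ hp]
    rfl

lemma eLpNorm_count_add_reflect_le {A : Type*} [AddGroup A] [Countable A] [MeasurableSpace A]
    [MeasurableSingletonClass A] (hp : 1 ≤ p) (f : A → E) (c : A) :
    eLpNorm (fun a => f a + f (c - a)) p .count ≤ 2 * eLpNorm f p .count := by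
  calc eLpNorm (fun a => f a + f (c - a)) p .count
      ≤ eLpNorm f p .count + eLpNorm (f ∘ (c - ·)) p .count :=
        eLpNorm_add_le .of_discrete .of_discrete hp
    _ = 2 * eLpNorm f p .count := by
        rw [eLpNorm_comp_measurePreserving .of_discrete (Measure.measurePreserving_sub_left _ c),
          two_mul]

variable [MeasurableSpace κ] [MeasurableSingletonClass κ]

lemma tsum_enorm_mul_enorm_le [Countable κ] [q.HolderConjugate t] (x : κ → 𝕜) (v : κ → E) :
    ∑' b, ‖x b‖ₑ * ‖v b‖ₑ ≤ eLpNorm x q .count * eLpNorm v t .count := by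
  simpa only [eLpNorm_one_eq_lintegral_enorm, lintegral_count, Pi.smul_apply', enorm_smul] using
    eLpNorm_smul_le_mul_eLpNorm (p := q) (q := t) (r := 1) (μ := .count)
      (.of_discrete (f := v)) (.of_discrete (f := x))

variable [MeasurableSpace ι] [MeasurableSingletonClass ι]

lemma eLpNorm_count_le_of_enorm_le_tsum [Countable κ] [q.HolderConjugate t] {H : ι → F}
    {x : ι → κ → 𝕜} {v : ι → κ → E} {M : ℝ≥0∞} (hx : ∀ i, eLpNorm (x i) q .count ≤ M)
    (hH : ∀ i, ‖H i‖ₑ ≤ ∑' b, ‖x i b‖ₑ * ‖v i b‖ₑ) :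
    eLpNorm H p .count ≤ M * eLpNorm (fun i => eLpNorm (v i) t .count) p .count := by
  rw [← eLpNorm_count_const_mul]
  refine eLpNorm_mono_enorm fun i => ?_
  calc ‖H i‖ₑ ≤ eLpNorm (x i) q .count * eLpNorm (v i) t .count :=
        (hH i).trans (tsum_enorm_mul_enorm_le _ _)
    _ ≤ M * eLpNorm (v i) t .count := by
        gcongr
        exact hx i

lemma eLpNorm_count_eLpNorm_smul_comp_perm (hp₀ : p ≠ 0) (hp : p ≠ ⊤) (y : κ → 𝕜) (G : ι → E)
    (σ : κ → Equiv.Perm ι) :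
    eLpNorm (fun i => eLpNorm (fun b => y b • G (σ b i)) p .count) p .count =
      eLpNorm y p .count * eLpNorm G p .count := by
  have hr : 0 < p.toReal := ENNReal.toReal_pos hp₀ hp
  simp only [eLpNorm_count_eq_tsum hp₀ hp, enorm_eq_self, enorm_smul]
  rw [← ENNReal.mul_rpow_of_nonneg _ _ (by positivity)]
  congr 1
  calc ∑' i, ((∑' b, (‖y b‖ₑ * ‖G (σ b i)‖ₑ) ^ p.toReal) ^ (1 / p.toReal)) ^ p.toReal
      = ∑' i, ∑' b, ‖y b‖ₑ ^ p.toReal * ‖G (σ b i)‖ₑ ^ p.toReal := by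
        simp only [← ENNReal.rpow_mul, one_div_mul_cancel hr.ne', ENNReal.rpow_one,
          ENNReal.mul_rpow_of_nonneg _ _ hr.le]
    _ = ∑' b, ‖y b‖ₑ ^ p.toReal * ∑' i, ‖G (σ b i)‖ₑ ^ p.toReal := by
        rw [ENNReal.tsum_comm]
        simp only [ENNReal.tsum_mul_left]
    _ = (∑' b, ‖y b‖ₑ ^ p.toReal) * ∑' i, ‖G i‖ₑ ^ p.toReal := by
        simp only [fun b => (σ b).tsum_eq fun i => ‖G i‖ₑ ^ p.toReal, ENNReal.tsum_mul_right]

lemma eLpNorm_top_count_eLpNorm_smul_comp_le [Countable κ] (y : κ → 𝕜) (G : ι → E)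
    (σ : κ → ι → ι) :
    eLpNorm (fun i => eLpNorm (fun b => y b • G (σ b i)) t .count) ⊤ .count ≤
      eLpNorm y t .count * eLpNorm G ⊤ .count := by
  have hG (i : ι) : eLpNorm (fun b => G (σ b i)) ⊤ .count ≤ eLpNorm G ⊤ .count := by
    simp only [eLpNorm_exponent_top, eLpNormEssSup_count]
    exact iSup_le fun b => le_iSup (fun i => ‖G i‖ₑ) (σ b i)
  rw [eLpNorm_exponent_top, eLpNormEssSup_count]
  exact iSup_le fun i => (eLpNorm_smul_le_eLpNorm_mul_eLpNorm_top _ _ .of_discrete).trans <|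
    mul_le_mul_right (hG i) _

end CountNorm

section Weight

variable {d : ℕ}

/-- The one-dimensional inverse Japanese bracket `⟨b⟩⁻¹`. It measures both the decay of `φⱼ` along
the line `ℤ eⱼ` and, through `⟨m⟩⁻¹ ≤ ⟨mⱼ⟩⁻¹`, the gain from the weight. -/
def invJap (b : ℤ) : ℝ := (√(1 + (b : ℝ) ^ 2))⁻¹

lemma invJap_pos (b : ℤ) : 0 < invJap b := by
  unfold invJap
  positivity

lemma invJap_sq (b : ℤ) : invJap b ^ 2 = (1 + (b : ℝ) ^ 2)⁻¹ := by
  rw [invJap, inv_pow, Real.sq_sqrt (by positivity)]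

lemma invJap_mul_abs_le_one (b : ℤ) : invJap b * |(b : ℝ)| ≤ 1 := by
  rw [invJap, inv_mul_le_one₀ (by positivity)]
  exact Real.abs_le_sqrt (by linarith)

lemma eLpNorm_invJap_ne_top {q : ℝ≥0∞} (hq : 1 < q) (hq' : q ≠ ⊤) :
    eLpNorm invJap q .count ≠ ⊤ := by
  have hr : 1 < q.toReal := by simpa using ENNReal.toReal_strict_mono hq' hq
  have hs : Summable fun b => ‖invJap b‖ ^ q.toReal := by
    refine .of_norm_bounded_eventually (Real.summable_abs_int_rpow hr) ?_
    filter_upwards [(Set.finite_singleton (0 : ℤ)).compl_mem_cofinite] with b hb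
    have hb : 0 < |(b : ℝ)| := abs_pos.mpr (Int.cast_ne_zero.mpr hb)
    rw [Real.norm_of_nonneg (by positivity), Real.norm_of_nonneg (invJap_pos b).le,
      Real.rpow_neg hb.le, ← Real.inv_rpow hb.le]
    gcongr
    · exact (invJap_pos b).le
    · rw [← one_div, le_div_iff₀ hb]
      exact invJap_mul_abs_le_one b
  have hmem : MemLp invJap q .count := by
    rw [← integrable_norm_rpow_iff .of_discrete (zero_lt_one.trans hq).ne' hq',
      integrable_count_iff]
    exact hs.norm
  exact hmem.eLpNorm_ne_top

lemma jap_pos (m : Fin d → ℤ) : 0 < jap m := by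
  unfold jap
  positivity

lemma jap_add_le (m n : Fin d → ℤ) : jap (m + n) ≤ jap m + √(∑ i, (n i : ℝ) ^ 2) := by
  have hm : √(∑ i, (m i : ℝ) ^ 2) ≤ jap m := Real.sqrt_le_sqrt (by linarith)
  have hcs : ∑ i, (m i : ℝ) * n i ≤ jap m * √(∑ i, (n i : ℝ) ^ 2) :=
    (Real.sum_mul_le_sqrt_mul_sqrt _ _ _).trans (by gcongr)
  refine Real.sqrt_le_iff.mpr ⟨add_nonneg (jap_pos m).le (Real.sqrt_nonneg _), ?_⟩
  calc 1 + ∑ i, (((m + n) i : ℤ) : ℝ) ^ 2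
      = 1 + ∑ i, (m i : ℝ) ^ 2 + 2 * ∑ i, (m i : ℝ) * n i + ∑ i, (n i : ℝ) ^ 2 := by
        simp only [Pi.add_apply, Int.cast_add, add_sq, Finset.sum_add_distrib, mul_assoc,
          ← Finset.mul_sum]
        ring
    _ ≤ jap m ^ 2 + 2 * (jap m * √(∑ i, (n i : ℝ) ^ 2)) + √(∑ i, (n i : ℝ) ^ 2) ^ 2 := by
        rw [jap, Real.sq_sqrt (by positivity), Real.sq_sqrt (by positivity), ← jap]
        gcongr
    _ = (jap m + √(∑ i, (n i : ℝ) ^ 2)) ^ 2 := by ring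

lemma jap_le_jap_sub_single_add (j : Fin d) (k : Fin d → ℤ) (b : ℤ) :
    jap k ≤ jap (k - Pi.single j b) + |(b : ℝ)| := by
  have hb : √(∑ i, ((Pi.single j b : Fin d → ℤ) i : ℝ) ^ 2) = |(b : ℝ)| := by
    simp [Pi.single_apply, ite_pow, Real.sqrt_sq_eq_abs]
  calc jap k = jap (k - Pi.single j b + Pi.single j b) := by rw [sub_add_cancel]
    _ ≤ jap (k - Pi.single j b) + |(b : ℝ)| := hb ▸ jap_add_le _ _

lemma one_le_invJap_mul_jap (j : Fin d) (m : Fin d → ℤ) : 1 ≤ invJap (m j) * jap m := by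
  rw [invJap, one_le_inv_mul₀ (by positivity), jap]
  gcongr
  exact Finset.single_le_sum (f := fun i => (m i : ℝ) ^ 2) (fun i _ => sq_nonneg _)
    (Finset.mem_univ j)

end Weight

section Derivative

variable {d : ℕ} (j : Fin d) (f : (Fin d → ℤ) → ℂ) (k : Fin d → ℤ)

lemma phi_single (b : ℤ) :
    phi d j (Pi.single j b) = -4 * Complex.I / (Real.pi * (4 * (b : ℂ) ^ 2 - 1)) := by
  have h : ∀ i, i ≠ j → (Pi.single j b : Fin d → ℤ) i = 0 := fun i hi => by simp [hi]
  rw [phi, if_pos h, Pi.single_eq_same]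

lemma support_phi_subset : Function.support (phi d j) ⊆ Set.range (Pi.single j) := by
  intro m hm
  have h : ∀ i, i ≠ j → m i = 0 := by
    by_contra h
    exact hm (if_neg h)
  refine ⟨m j, funext fun i => ?_⟩
  rcases eq_or_ne i j with rfl | hi
  · exact Pi.single_eq_same i _
  · rw [Pi.single_eq_of_ne hi, h i hi]

lemma norm_phi_single_le (b : ℤ) : ‖phi d j (Pi.single j b)‖ ≤ 4 * invJap b ^ 2 := by
  have hden : 1 + (b : ℝ) ^ 2 ≤ Real.pi * |4 * (b : ℝ) ^ 2 - 1| := by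
    have hpi := Real.pi_gt_three
    rcases eq_or_ne b 0 with rfl | hb
    · simpa using (by linarith : 1 ≤ Real.pi)
    · have hb1 : (1 : ℝ) ≤ (b : ℝ) ^ 2 := by
        exact_mod_cast (one_le_sq_iff_one_le_abs b).mpr (Int.one_le_abs hb)
      rw [abs_of_pos (by linarith)]
      nlinarith
  have hnorm : ‖phi d j (Pi.single j b)‖ = 4 / (Real.pi * |4 * (b : ℝ) ^ 2 - 1|) := by
    have hcast : (4 * (b : ℂ) ^ 2 - 1) = ((4 * (b : ℝ) ^ 2 - 1 : ℝ) : ℂ) := by push_cast; rfl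
    rw [phi_single, hcast, norm_div, norm_mul, norm_mul, norm_neg, Complex.norm_ofNat,
      Complex.norm_I, mul_one, Complex.norm_real, Complex.norm_real, Real.norm_eq_abs,
      Real.norm_eq_abs, abs_of_pos Real.pi_pos]
  rw [hnorm, invJap_sq, ← div_eq_mul_inv]
  gcongr

lemma norm_phi_single_mul_jap_le (b : ℤ) :
    ‖phi d j (Pi.single j b)‖ * jap k ≤
      4 * (invJap b + invJap (k j - b)) * (invJap b * jap (k - Pi.single j b)) := by
  set J := jap (k - Pi.single j b)
  have hu := (invJap_pos b).le
  have hJ : 1 ≤ invJap (k j - b) * J := by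
    have h := one_le_invJap_mul_jap j (k - Pi.single j b)
    rwa [Pi.sub_apply, Pi.single_eq_same] at h
  calc ‖phi d j (Pi.single j b)‖ * jap k
      ≤ 4 * invJap b ^ 2 * (J + |(b : ℝ)|) :=
        mul_le_mul (norm_phi_single_le j b) (jap_le_jap_sub_single_add j k b) (jap_pos k).le
          (by positivity)
    _ = 4 * invJap b * (invJap b * J + invJap b * |(b : ℝ)|) := by ring
    _ ≤ 4 * invJap b * (invJap b * J + invJap (k j - b) * J) := by
        gcongr 4 * invJap b * (_ + ?_)
        exact (invJap_mul_abs_le_one b).trans hJ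
    _ = 4 * (invJap b + invJap (k j - b)) * (invJap b * J) := by ring

lemma pd_eq_tsum_single :
    pd j f k = ∑' b, f (k - Pi.single j b) * phi d j (Pi.single j b) := by
  have hsupp : Function.support (fun m => f (k - m) * phi d j m) ⊆ Set.range (Pi.single j) :=
    (Function.support_mul_subset_right _ _).trans (support_phi_subset j)
  calc pd j f k = ∑' m, f (k - m) * phi d j m := by
        rw [pd, dconv, ← (Equiv.subLeft k).tsum_eq]
        simp only [Equiv.subLeft_apply, sub_sub_cancel]
    _ = ∑' b, f (k - Pi.single j b) * phi d j (Pi.single j b) :=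
        ((Pi.single_injective j).tsum_eq hsupp).symm

lemma enorm_pd_mul_jap_le :
    ‖pd j f k * jap k‖ₑ ≤ ∑' b, ‖(4 : ℝ) * (invJap b + invJap (k j - b))‖ₑ *
      ‖invJap b • (f (k - Pi.single j b) * jap (k - Pi.single j b))‖ₑ := by
  calc ‖pd j f k * jap k‖ₑ
      ≤ ∑' b, ‖f (k - Pi.single j b) * phi d j (Pi.single j b) * jap k‖ₑ := by
        rw [pd_eq_tsum_single, ← tsum_mul_right]
        exact enorm_tsum_le_tsum_enorm
    _ ≤ _ := by
        refine ENNReal.tsum_le_tsum fun b => ?_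
        have hw : 0 < invJap b + invJap (k j - b) := add_pos (invJap_pos _) (invJap_pos _)
        rw [← enorm_smul, enorm_le_iff_norm_le]
        simp only [norm_smul, norm_mul, Complex.norm_real, Real.norm_of_nonneg (jap_pos _).le,
          Real.norm_of_nonneg (invJap_pos _).le, Real.norm_of_nonneg hw.le, Real.norm_ofNat]
        calc ‖f (k - Pi.single j b)‖ * ‖phi d j (Pi.single j b)‖ * jap k
            = ‖f (k - Pi.single j b)‖ * (‖phi d j (Pi.single j b)‖ * jap k) := mul_assoc _ _ _
          _ ≤ ‖f (k - Pi.single j b)‖ * (4 * (invJap b + invJap (k j - b)) *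
                (invJap b * jap (k - Pi.single j b))) := by
              gcongr _ * ?_
              exact norm_phi_single_mul_jap_le j k b
          _ = _ := by ring

lemma eLpNorm_four_mul_invJap_add_reflect_le {q : ℝ≥0∞} (hq : 1 ≤ q) (c : ℤ) :
    eLpNorm (fun b => (4 : ℝ) * (invJap b + invJap (c - b))) q .count ≤
      8 * eLpNorm invJap q .count := by
  calc eLpNorm (fun b => (4 : ℝ) * (invJap b + invJap (c - b))) q .count
      = 4 * eLpNorm (fun b => invJap b + invJap (c - b)) q .count := by
        simpa [Pi.smul_def, Real.enorm_eq_ofReal] using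
          eLpNorm_const_smul (4 : ℝ) (fun b => invJap b + invJap (c - b)) q .count
    _ ≤ 4 * (2 * eLpNorm invJap q .count) := by
        gcongr
        exact eLpNorm_count_add_reflect_le hq _ c
    _ = 8 * eLpNorm invJap q .count := by ring

lemma wlp_pd_le_eLpNorm_eLpNorm {p q t : ℝ≥0∞} [q.HolderConjugate t] (hp₀ : p ≠ 0) :
    wlp p (pd j f) ≤ 8 * eLpNorm invJap q .count *
      eLpNorm (fun k : Fin d → ℤ => eLpNorm (fun b : ℤ =>
        invJap b • (f (k - Pi.single j b) * jap (k - Pi.single j b))) t .count) p .count := by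
  rw [wlp, lpn_eq_eLpNorm_count hp₀]
  exact eLpNorm_count_le_of_enorm_le_tsum
    (fun k => eLpNorm_four_mul_invJap_add_reflect_le (ENNReal.HolderConjugate.one_le q t) (k j))
    (enorm_pd_mul_jap_le j f)

lemma wlp_pd_le {p q : ℝ≥0∞} [q.HolderConjugate p] (hp : p ≠ ⊤) :
    wlp p (pd j f) ≤ 8 * eLpNorm invJap q .count * (eLpNorm invJap p .count * wlp p f) := by
  have hp₀ : p ≠ 0 := ENNReal.HolderConjugate.ne_zero p q
  have hnorm := eLpNorm_count_eLpNorm_smul_comp_perm hp₀ hp invJap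
    (fun m => f m * (jap m : ℂ)) fun b => Equiv.subRight (Pi.single j b)
  calc wlp p (pd j f) ≤ _ := wlp_pd_le_eLpNorm_eLpNorm j f hp₀ (q := q) (t := p)
    _ = 8 * eLpNorm invJap q .count * (eLpNorm invJap p .count * wlp p f) := by
        rw [wlp, lpn_eq_eLpNorm_count hp₀, ← hnorm]
        rfl

lemma wlp_top_pd_le {q t : ℝ≥0∞} [q.HolderConjugate t] :
    wlp ⊤ (pd j f) ≤ 8 * eLpNorm invJap q .count * (eLpNorm invJap t .count * wlp ⊤ f) := by
  have hnorm := eLpNorm_top_count_eLpNorm_smul_comp_le (t := t) invJap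
    (fun m => f m * (jap m : ℂ)) fun b k => k - Pi.single j b
  calc wlp ⊤ (pd j f) ≤ _ := wlp_pd_le_eLpNorm_eLpNorm j f ENNReal.top_ne_zero (q := q) (t := t)
    _ ≤ 8 * eLpNorm invJap q .count * (eLpNorm invJap t .count * wlp ⊤ f) := by
        rw [wlp, lpn_eq_eLpNorm_count ENNReal.top_ne_zero]
        exact mul_le_mul_right hnorm _

end Derivative

/-- `ℓ^{p,1}` boundedness of the discrete partial derivative for `1 < p ≤ ∞`. -/
theorem stmt5 (d : ℕ) (hd : 0 < d) (p : ℝ≥0∞) (hp : 1 < p) :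
    ∃ C : ℝ≥0, 0 < C ∧
      ∀ f : (Fin d → ℤ) → ℂ, wlp p f < ⊤ → ∀ j : Fin d,
        wlp p (pd j f) ≤ (C : ℝ≥0∞) * wlp p f := by
  suffices h : ∃ C : ℝ≥0∞, C ≠ ⊤ ∧ ∀ (f : (Fin d → ℤ) → ℂ) j, wlp p (pd j f) ≤ C * wlp p f by
    obtain ⟨C, hC, h⟩ := h
    refine ⟨C.toNNReal + 1, by positivity, fun f _ j => (h f j).trans ?_⟩
    gcongr
    rw [ENNReal.coe_add, ENNReal.coe_toNNReal hC]
    exact le_self_add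
  rcases eq_or_ne p ⊤ with rfl | hp_top
  · have h₂ : eLpNorm invJap 2 .count ≠ ⊤ :=
      eLpNorm_invJap_ne_top (by norm_num) ENNReal.ofNat_ne_top
    refine ⟨8 * eLpNorm invJap 2 .count * eLpNorm invJap 2 .count, by finiteness, fun f j => ?_⟩
    rw [mul_assoc]
    exact wlp_top_pd_le j f
  · obtain ⟨q, hqp⟩ : ∃ q : ℝ≥0∞, q.HolderConjugate p :=
      ⟨_, (ENNReal.HolderConjugate.conjExponent hp.le).symm⟩
    have hp_fin : eLpNorm invJap p .count ≠ ⊤ := eLpNorm_invJap_ne_top hp hp_top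
    have hq_fin : eLpNorm invJap q .count ≠ ⊤ :=
      eLpNorm_invJap_ne_top ((ENNReal.HolderConjugate.lt_top_iff_one_lt p q).mp hp_top.lt_top)
        ((ENNReal.HolderConjugate.ne_top_iff_ne_one q p).mpr hp.ne')
    refine ⟨8 * eLpNorm invJap q .count * eLpNorm invJap p .count, by finiteness, fun f j => ?_⟩
    rw [mul_assoc]
    exact wlp_pd_le j f hp_top
end
end

section
/- There is a constant C (depending only on d) such that for every f ∈ ℓ^{1,1}(ℤ^d), every j = 1,…,d and every α > 0, the cardinality of the set { k ∈ ℤ^d : |∂_j f(k)| ≥ α/⟨k⟩ } is at most C‖f‖_{ℓ^{1,1}(ℤ^d)}/α; i.e. the discrete partial derivative satisfies a weak ℓ^{1,1} bound sup_{α>0} α·|{ |∂_j f(k)| ≥ α⟨k⟩^{-1} }| ≤ C‖f‖_{ℓ^{1,1}(ℤ^d)}. -/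
open scoped BigOperators ENNReal NNReal
open MeasureTheory Filter

noncomputable section

/-!
On a line in direction `j`, the weight `⟨k⟩` is at least `1` and `|kⱼ|`, and it is `1`-Lipschitz.
Let `k`, `m` be two points of the line and `a = kⱼ - mⱼ`. From `⟨k⟩ ≤ ⟨m⟩ + |a|`,
`|kⱼ| ≤ |a| + ⟨m⟩` and `|φⱼ(k - m)| ≤ 2(1 + |a|)⁻²` one gets
`⟨k⟩ |φⱼ(k - m)| ≤ 2⟨m⟩ (2(1 + |a|)⁻² + (1 + |kⱼ|)⁻²) + 2(1 + |kⱼ|)⁻¹`.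
The first term is summable in `kⱼ` with total mass `O(⟨m⟩)`, so Chebyshev's inequality applies to
its contribution. The last term does not depend on `m`: it contributes the mass of `f` on the line
times the fixed weak `ℓ¹` function `2(1 + |kⱼ|)⁻¹`. Counts of points add up over the lines, so the
bounds on single lines can be summed, with a constant that does not depend on `d`.
-/

/-- The weak `ℓ¹` quasi-norm `sup_t t · #{x : g x ≥ t}`; measuring `g` by it turns the weak-type
bound into a single inequality. It takes values in `ℝ≥0∞`, and levels `t = ∞` are allowed. -/
def weakNorm {ι : Type*} (g : ι → ℝ≥0∞) : ℝ≥0∞ :=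
  ⨆ t : ℝ≥0∞, t * ({x | t ≤ g x}.encard : ℝ≥0∞)

section WeakNorm

variable {ι κ β : Type*} {g h : ι → ℝ≥0∞}

theorem mul_encard_le_weakNorm (g : ι → ℝ≥0∞) (t : ℝ≥0∞) :
    t * ({x | t ≤ g x}.encard : ℝ≥0∞) ≤ weakNorm g :=
  le_iSup (fun t : ℝ≥0∞ => t * ({x | t ≤ g x}.encard : ℝ≥0∞)) t

theorem weakNorm_mono (hgh : g ≤ h) : weakNorm g ≤ weakNorm h := by
  refine iSup_mono fun t => ?_
  gcongr with x
  exact hgh x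

theorem weakNorm_le_tsum (g : ι → ℝ≥0∞) : weakNorm g ≤ ∑' x, g x := by
  refine iSup_le fun t => ?_
  calc t * ({x | t ≤ g x}.encard : ℝ≥0∞)
      = ∑' _ : {x | t ≤ g x}, t := by rw [ENNReal.tsum_set_const, mul_comm]
    _ ≤ ∑' x : {x | t ≤ g x}, g x := ENNReal.tsum_le_tsum fun x => x.2
    _ ≤ ∑' x, g x := ENNReal.tsum_comp_le_tsum_of_injective Subtype.val_injective g

theorem weakNorm_add_le (g h : ι → ℝ≥0∞) :
    weakNorm (g + h) ≤ 2 * weakNorm g + 2 * weakNorm h := by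
  refine iSup_le fun t => ?_
  have hsub : {x | t ≤ (g + h) x} ⊆ {x | t / 2 ≤ g x} ∪ {x | t / 2 ≤ h x} := by
    intro x hx
    by_contra! hlt
    simp only [Set.mem_union, Set.mem_ofPred_eq, not_or, not_le] at hlt
    have hsum := ENNReal.add_lt_add hlt.1 hlt.2
    rw [ENNReal.add_halves] at hsum
    exact hsum.not_ge hx
  have hcard : ({x | t ≤ (g + h) x}.encard : ℝ≥0∞) ≤
      {x | t / 2 ≤ g x}.encard + {x | t / 2 ≤ h x}.encard := by
    exact_mod_cast (Set.encard_le_encard hsub).trans (Set.encard_union_le _ _)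
  calc t * ({x | t ≤ (g + h) x}.encard : ℝ≥0∞)
      ≤ t * ({x | t / 2 ≤ g x}.encard + {x | t / 2 ≤ h x}.encard) := by gcongr
    _ = 2 * (t / 2 * {x | t / 2 ≤ g x}.encard) + 2 * (t / 2 * {x | t / 2 ≤ h x}.encard) := by
      rw [← mul_assoc, ← mul_assoc, ENNReal.mul_div_cancel two_ne_zero ENNReal.ofNat_ne_top,
        mul_add]
    _ ≤ 2 * weakNorm g + 2 * weakNorm h := by
      gcongr <;> exact mul_encard_le_weakNorm _ _

theorem weakNorm_zero : weakNorm (0 : ι → ℝ≥0∞) = 0 :=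
  le_antisymm ((weakNorm_le_tsum 0).trans_eq tsum_zero) zero_le

theorem le_weakNorm (g : ι → ℝ≥0∞) (x : ι) : g x ≤ weakNorm g := by
  have hcard : (1 : ℝ≥0∞) ≤ {y | g x ≤ g y}.encard := by
    exact_mod_cast Set.one_le_encard_iff_nonempty.2 ⟨x, (le_rfl : g x ≤ g x)⟩
  exact (le_mul_of_one_le_right' hcard).trans (mul_encard_le_weakNorm g (g x))

theorem weakNorm_eq_zero : weakNorm g = 0 ↔ g = 0 :=
  ⟨fun hg => funext fun x => le_antisymm ((le_weakNorm g x).trans_eq hg) zero_le,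
    fun hg => hg ▸ weakNorm_zero⟩

theorem weakNorm_const_mul_le (c : ℝ≥0∞) (g : ι → ℝ≥0∞) :
    weakNorm (fun x => c * g x) ≤ c * weakNorm g := by
  obtain rfl | hg := eq_or_ne g 0
  · simp [← Pi.zero_def, weakNorm_zero]
  obtain rfl | hc₀ := eq_or_ne c 0
  · simp [← Pi.zero_def, weakNorm_zero]
  obtain rfl | hc := eq_or_ne c ⊤
  · rw [ENNReal.top_mul (weakNorm_eq_zero.not.2 hg)]
    exact le_top
  refine iSup_le fun t => ?_
  calc t * ({x | t ≤ c * g x}.encard : ℝ≥0∞)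
      ≤ t * ({x | t / c ≤ g x}.encard : ℝ≥0∞) := by
        gcongr t * (Set.encard {x | ?_} : ℝ≥0∞) with x
        exact ENNReal.div_le_of_le_mul'
    _ = c * (t / c * ({x | t / c ≤ g x}.encard : ℝ≥0∞)) := by
        rw [← mul_assoc, ENNReal.mul_div_cancel hc₀ hc]
    _ ≤ c * weakNorm g := by
        gcongr
        exact mul_encard_le_weakNorm g _

open scoped Classical in
theorem encard_setOf_eq_tsum (p : ι → Prop) :
    ({x | p x}.encard : ℝ≥0∞) = ∑' x, if p x then 1 else 0 := by
  rw [← ENNReal.tsum_set_one, tsum_subtype {x | p x} fun _ => (1 : ℝ≥0∞)]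
  rfl

theorem weakNorm_le_tsum_weakNorm_fiber (e : κ × β ≃ ι) (g : ι → ℝ≥0∞) :
    weakNorm g ≤ ∑' y, weakNorm fun n => g (e (n, y)) := by
  classical
  refine iSup_le fun t => ?_
  calc t * ({x | t ≤ g x}.encard : ℝ≥0∞)
      = ∑' y, t * ({n | t ≤ g (e (n, y))}.encard : ℝ≥0∞) := by
        simp_rw [encard_setOf_eq_tsum]
        rw [← e.tsum_eq, ENNReal.tsum_prod', ENNReal.tsum_comm, ENNReal.tsum_mul_left]
    _ ≤ ∑' y, weakNorm fun n => g (e (n, y)) :=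
        ENNReal.tsum_le_tsum fun y => mul_encard_le_weakNorm _ t

end WeakNorm

/-- The profile `(1 + |n|)⁻¹` on `ℤ`: it lies in weak `ℓ¹`, and its square, which lies in `ℓ¹`,
dominates the kernel `φⱼ` along its axis. -/
def decay (n : ℤ) : ℝ≥0 := (1 + ‖n‖₊)⁻¹

theorem encard_le_two_mul_of_natAbs_lt {s : Set ℤ} {N : ℕ} (hs : ∀ n ∈ s, n.natAbs < N) :
    s.encard ≤ 2 * N := by
  have hsub : s ⊆ Finset.Ioo (-N : ℤ) N := fun n hn => by
    have := hs n hn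
    rw [Finset.coe_Ioo, Set.mem_Ioo]
    omega
  refine (Set.encard_le_encard hsub).trans ?_
  rw [Set.encard_coe_eq_coe_finsetCard, Int.card_Ioo]
  have : ((N : ℤ) - -N - 1).toNat ≤ 2 * N := by omega
  exact_mod_cast this

theorem weakNorm_decay_le : weakNorm (fun n => (decay n : ℝ≥0∞)) ≤ 2 := by
  refine iSup_le fun t => ?_
  obtain rfl | ht₀ := eq_or_ne t 0
  · simp
  obtain rfl | ht := eq_or_ne t ⊤
  · simp
  lift t to ℝ≥0 using ht
  rw [Ne, ENNReal.coe_eq_zero] at ht₀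
  have hlevel : ∀ n ∈ {n : ℤ | (t : ℝ≥0∞) ≤ decay n}, n.natAbs < ⌊t⁻¹⌋₊ := fun n hn => by
    have hn : t ≤ (1 + ‖n‖₊)⁻¹ := ENNReal.coe_le_coe.1 hn
    refine Nat.le_floor ?_
    rw [Nat.cast_succ, NNReal.natCast_natAbs, add_comm]
    exact (le_inv_comm₀ (pos_iff_ne_zero.2 ht₀) (by positivity)).1 hn
  have hcard : ({n : ℤ | (t : ℝ≥0∞) ≤ decay n}.encard : ℝ≥0∞) ≤ 2 * ⌊t⁻¹⌋₊ := by
    exact_mod_cast encard_le_two_mul_of_natAbs_lt hlevel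
  calc (t : ℝ≥0∞) * ({n : ℤ | (t : ℝ≥0∞) ≤ decay n}.encard : ℝ≥0∞)
      ≤ t * (2 * ⌊t⁻¹⌋₊) := by gcongr
    _ ≤ ((t * (2 * t⁻¹) : ℝ≥0) : ℝ≥0∞) := by
        have := Nat.floor_le (zero_le (a := t⁻¹))
        exact_mod_cast (by gcongr : t * (2 * (⌊t⁻¹⌋₊ : ℝ≥0)) ≤ t * (2 * t⁻¹))
    _ = 2 := by
        rw [mul_left_comm, mul_inv_cancel₀ ht₀, mul_one, ENNReal.coe_ofNat]

theorem tsum_decay_sq_ne_top : ∑' n, (decay n : ℝ≥0∞) ^ 2 ≠ ⊤ := by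
  have hnat : Summable fun n : ℕ => ((1 + (n : ℝ))⁻¹) ^ 2 := by
    refine ((summable_nat_add_iff 1).2 (Real.summable_nat_pow_inv.2 one_lt_two)).congr fun n => ?_
    rw [Nat.cast_succ, add_comm, inv_pow]
  have hint : Summable fun n : ℤ => ((decay n ^ 2 : ℝ≥0) : ℝ) := by
    apply Summable.of_nat_of_neg <;> simpa [decay] using hnat
  simpa using ENNReal.tsum_coe_ne_top_iff_summable.2 (NNReal.summable_coe.1 hint)

theorem add_mul_inv_sq_le {A K J : ℝ≥0} (h : K ≤ A + J) :
    (J + A) * (1 + A)⁻¹ ^ 2 ≤ J * (2 * (1 + A)⁻¹ ^ 2 + (1 + K)⁻¹ ^ 2) + (1 + K)⁻¹ := by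
  set p := (1 + A)⁻¹
  set q := (1 + K)⁻¹
  have hp : (1 + A) * p = 1 := mul_inv_cancel₀ (by positivity)
  have hq : (1 + K) * q = 1 := mul_inv_cancel₀ (by positivity)
  have hAp : A * p ≤ 1 := by
    rw [← hp]
    gcongr
    exact le_add_self
  have hpq : p * q ≤ p ^ 2 + q ^ 2 := by
    refine le_trans ?_ (two_mul_le_add_sq p q)
    rw [mul_assoc]
    exact le_mul_of_one_le_left' one_le_two
  -- `1 + K ≤ (1 + A) + J` trades `p` for `q`, up to a cross term to which AM-GM applies
  have htrade : p ≤ q + J * (p * q) := calc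
    p = p * ((1 + K) * q) := by rw [hq, mul_one]
    _ ≤ p * ((1 + (A + J)) * q) := by gcongr
    _ = (1 + A) * p * q + J * (p * q) := by ring
    _ = q + J * (p * q) := by rw [hp, one_mul]
  calc (J + A) * p ^ 2 = J * p ^ 2 + A * p * p := by ring
    _ ≤ J * p ^ 2 + 1 * (q + J * (p ^ 2 + q ^ 2)) := by
        gcongr
        exact htrade.trans (by gcongr)
    _ = J * (2 * p ^ 2 + q ^ 2) + q := by ring

section Line

variable {w : ℤ → ℝ≥0}

theorem weight_mul_decay_sq_le (hw_norm : ∀ n, ‖n‖₊ ≤ w n)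
    (hw_lip : ∀ n m, w n ≤ w m + ‖n - m‖₊) (n m : ℤ) :
    w n * decay (n - m) ^ 2 ≤ w m * (2 * decay (n - m) ^ 2 + decay n ^ 2) + decay n := by
  have hn : ‖n‖₊ ≤ ‖n - m‖₊ + w m := calc
    ‖n‖₊ = ‖n - m + m‖₊ := by rw [sub_add_cancel]
    _ ≤ ‖n - m‖₊ + ‖m‖₊ := nnnorm_add_le _ _
    _ ≤ ‖n - m‖₊ + w m := by gcongr; exact hw_norm m
  refine le_trans ?_ (add_mul_inv_sq_le hn)
  gcongr
  · exact hw_lip n m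
  · exact le_rfl

theorem weight_mul_conv_decay_sq_le (hw_norm : ∀ n, ‖n‖₊ ≤ w n)
    (hw_lip : ∀ n m, w n ≤ w m + ‖n - m‖₊) (g : ℤ → ℝ≥0∞) (n : ℤ) :
    (w n : ℝ≥0∞) * ∑' m, g m * (decay (n - m) : ℝ≥0∞) ^ 2 ≤
      ∑' m, g m * w m * (2 * (decay (n - m) : ℝ≥0∞) ^ 2 + (decay n : ℝ≥0∞) ^ 2) +
        (∑' m, g m) * decay n := by
  rw [← ENNReal.tsum_mul_left, ← ENNReal.tsum_mul_right, ← ENNReal.tsum_add]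
  refine ENNReal.tsum_le_tsum fun m => ?_
  have hkernel : (w n : ℝ≥0∞) * (decay (n - m) : ℝ≥0∞) ^ 2 ≤
      w m * (2 * (decay (n - m) : ℝ≥0∞) ^ 2 + (decay n : ℝ≥0∞) ^ 2) + decay n := by
    exact_mod_cast weight_mul_decay_sq_le hw_norm hw_lip n m
  rw [mul_left_comm, mul_assoc, ← mul_add]
  gcongr

theorem tsum_tsum_mul_decay_sq_add (c : ℤ → ℝ≥0∞) :
    ∑' n, ∑' m, c m * (2 * (decay (n - m) : ℝ≥0∞) ^ 2 + (decay n : ℝ≥0∞) ^ 2) =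
      3 * (∑' n, (decay n : ℝ≥0∞) ^ 2) * ∑' m, c m := by
  rw [ENNReal.tsum_comm, ← ENNReal.tsum_mul_left]
  refine tsum_congr fun m => ?_
  have hshift : ∑' n, (decay (n - m) : ℝ≥0∞) ^ 2 = ∑' n, (decay n : ℝ≥0∞) ^ 2 :=
    (Equiv.subRight m).tsum_eq fun n => (decay n : ℝ≥0∞) ^ 2
  rw [ENNReal.tsum_mul_left, ENNReal.tsum_add, ENNReal.tsum_mul_left, hshift]
  ring

theorem weakNorm_weight_mul_conv_decay_sq_le (hw_one : ∀ n, 1 ≤ w n)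
    (hw_norm : ∀ n, ‖n‖₊ ≤ w n) (hw_lip : ∀ n m, w n ≤ w m + ‖n - m‖₊) (g : ℤ → ℝ≥0∞) :
    weakNorm (fun n => (w n : ℝ≥0∞) * ∑' m, g m * (decay (n - m) : ℝ≥0∞) ^ 2) ≤
      (6 * ∑' n, (decay n : ℝ≥0∞) ^ 2 + 4) * ∑' m, g m * w m := by
  set S := ∑' n, (decay n : ℝ≥0∞) ^ 2
  set strong : ℤ → ℝ≥0∞ := fun n =>
    ∑' m, g m * w m * (2 * (decay (n - m) : ℝ≥0∞) ^ 2 + (decay n : ℝ≥0∞) ^ 2)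
  set weak : ℤ → ℝ≥0∞ := fun n => (∑' m, g m) * decay n
  have hstrong : weakNorm strong ≤ 3 * S * ∑' m, g m * w m :=
    (weakNorm_le_tsum strong).trans_eq (tsum_tsum_mul_decay_sq_add _)
  have hweak : weakNorm weak ≤ 2 * ∑' m, g m * w m := calc
    weakNorm weak ≤ (∑' m, g m) * 2 :=
      (weakNorm_const_mul_le _ _).trans (by gcongr; exact weakNorm_decay_le)
    _ ≤ (∑' m, g m * w m) * 2 := by
      gcongr with m
      exact le_mul_of_one_le_right' (by exact_mod_cast hw_one m)
    _ = 2 * ∑' m, g m * w m := mul_comm _ _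
  calc weakNorm (fun n => (w n : ℝ≥0∞) * ∑' m, g m * (decay (n - m) : ℝ≥0∞) ^ 2)
      ≤ weakNorm (strong + weak) :=
        weakNorm_mono (weight_mul_conv_decay_sq_le hw_norm hw_lip g)
    _ ≤ 2 * weakNorm strong + 2 * weakNorm weak := weakNorm_add_le _ _
    _ ≤ 2 * (3 * S * ∑' m, g m * w m) + 2 * (2 * ∑' m, g m * w m) := by gcongr
    _ = (6 * S + 4) * ∑' m, g m * w m := by ring

end Line

section Jap

variable {d : ℕ}

/-- The vector `(1, m)` of `ℝ^(d+1)`. Its Euclidean norm is `⟨m⟩`, so that bounds on the bracket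
become instances of general facts about norms. -/
def consOne (m : Fin d → ℤ) : EuclideanSpace ℝ (Fin (d + 1)) :=
  WithLp.toLp 2 (Fin.cons 1 fun i => (m i : ℝ))

theorem norm_consOne (m : Fin d → ℤ) : ‖consOne m‖ = jap m := by
  simp [consOne, jap, EuclideanSpace.norm_eq, Fin.sum_univ_succ]

theorem one_le_jap (m : Fin d → ℤ) : 1 ≤ jap m := by
  rw [← norm_consOne]
  simpa [consOne] using PiLp.norm_apply_le (consOne m) 0

theorem abs_le_jap (j : Fin d) (m : Fin d → ℤ) : |(m j : ℝ)| ≤ jap m := by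
  rw [← norm_consOne]
  simpa [consOne] using PiLp.norm_apply_le (consOne m) j.succ

theorem jap_le_jap_add_abs_sub {j : Fin d} {x m : Fin d → ℤ} (h : ∀ i ≠ j, x i = m i) :
    jap x ≤ jap m + |(x j : ℝ) - m j| := by
  have hsub : consOne x - consOne m = EuclideanSpace.single j.succ ((x j : ℝ) - m j) := by
    ext i
    refine Fin.cases ?_ (fun i => ?_) i
    · simp [consOne, (Fin.succ_ne_zero j).symm]
    · obtain rfl | hi := eq_or_ne i j
      · simp [consOne]
      · simp [consOne, h i hi, hi]
  rw [← norm_consOne, ← norm_consOne]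
  refine (norm_le_norm_add_norm_sub' _ (consOne m)).trans_eq ?_
  rw [hsub, PiLp.norm_single, Real.norm_eq_abs]

end Jap

theorem three_quarters_mul_one_add_abs_sq_le (n : ℤ) :
    3 / 4 * (1 + |(n : ℝ)|) ^ 2 ≤ |4 * (n : ℝ) ^ 2 - 1| := by
  obtain rfl | hn := eq_or_ne n 0
  · norm_num
  · have h1 : (1 : ℝ) ≤ |(n : ℝ)| := by exact_mod_cast Int.one_le_abs hn
    refine le_trans ?_ (le_abs_self _)
    rw [← sq_abs (n : ℝ)]
    nlinarith

section Derivative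

variable {d : ℕ} (j : Fin d)

theorem norm_phi_le (a : Fin d → ℤ) : ‖phi d j a‖ ≤ 2 * (1 + |(a j : ℝ)|)⁻¹ ^ 2 := by
  unfold phi
  split_ifs
  · have hnum : ‖-4 * Complex.I‖ = 4 := by simp
    have hden : ‖(Real.pi : ℂ) * (4 * (a j : ℂ) ^ 2 - 1)‖ =
        Real.pi * |4 * (a j : ℝ) ^ 2 - 1| := by
      rw [norm_mul, Complex.norm_real, Real.norm_of_nonneg Real.pi_pos.le, ← Real.norm_eq_abs,
        ← Complex.norm_real]
      push_cast
      rfl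
    calc ‖-4 * Complex.I / ((Real.pi : ℂ) * (4 * (a j : ℂ) ^ 2 - 1))‖
        = 4 / (Real.pi * |4 * (a j : ℝ) ^ 2 - 1|) := by rw [norm_div, hnum, hden]
      _ ≤ 4 / (3 * (3 / 4 * (1 + |(a j : ℝ)|) ^ 2)) := by
          gcongr
          · exact Real.pi_gt_three.le
          · exact three_quarters_mul_one_add_abs_sq_le (a j)
      _ = 16 / 9 * (1 + |(a j : ℝ)|)⁻¹ ^ 2 := by field_simp; norm_num
      _ ≤ 2 * (1 + |(a j : ℝ)|)⁻¹ ^ 2 := by gcongr; norm_num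
  · rw [norm_zero]
    positivity

theorem enorm_phi_le (a : Fin d → ℤ) : ‖phi d j a‖ₑ ≤ 2 * (decay (a j) : ℝ≥0∞) ^ 2 := by
  have h : ‖phi d j a‖₊ ≤ 2 * decay (a j) ^ 2 := by
    rw [← NNReal.coe_le_coe]
    simpa [decay, Int.norm_eq_abs] using norm_phi_le j a
  exact_mod_cast ENNReal.coe_le_coe.2 h

/-- The point with `j`-th coordinate `n` and transverse coordinates `y`; as `n` varies it runs
through the line in direction `j` on which the convolution with `φⱼ` takes place. -/
def linePoint (y : {i // i ≠ j} → ℤ) (n : ℤ) : Fin d → ℤ :=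
  (Equiv.funSplitAt j ℤ).symm (n, y)

variable {j} in
@[simp]
theorem linePoint_self (y : {i // i ≠ j} → ℤ) (n : ℤ) : linePoint j y n j = n := by
  simp [linePoint]

variable {j} in
theorem linePoint_of_ne (y : {i // i ≠ j} → ℤ) (n : ℤ) {i : Fin d} (hi : i ≠ j) :
    linePoint j y n i = y ⟨i, hi⟩ := by
  simp [linePoint, hi]

theorem tsum_eq_tsum_linePoint (F : (Fin d → ℤ) → ℝ≥0∞) :
    ∑' x, F x = ∑' y, ∑' n, F (linePoint j y n) := by
  rw [← (Equiv.funSplitAt j ℤ).symm.tsum_eq, ENNReal.tsum_prod', ENNReal.tsum_comm]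
  rfl

variable {j} in
theorem phi_linePoint_sub_eq_zero {y z : {i // i ≠ j} → ℤ} (hyz : z ≠ y) (n m : ℤ) :
    phi d j (linePoint j y n - linePoint j z m) = 0 := by
  refine if_neg fun hzero => hyz (funext fun ⟨i, hi⟩ => ?_)
  have := hzero i hi
  rw [Pi.sub_apply, linePoint_of_ne _ _ hi, linePoint_of_ne _ _ hi, sub_eq_zero] at this
  exact this.symm

theorem enorm_pd_linePoint_le (f : (Fin d → ℤ) → ℂ) (y : {i // i ≠ j} → ℤ) (n : ℤ) :
    ‖pd j f (linePoint j y n)‖ₑ ≤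
      2 * ∑' m, ‖f (linePoint j y m)‖ₑ * (decay (n - m) : ℝ≥0∞) ^ 2 := by
  calc ‖pd j f (linePoint j y n)‖ₑ
      ≤ ∑' x, ‖f x‖ₑ * ‖phi d j (linePoint j y n - x)‖ₑ := by
        simp_rw [← enorm_mul]
        exact enorm_tsum_le_tsum_enorm
    _ = ∑' m, ‖f (linePoint j y m)‖ₑ *
          ‖phi d j (linePoint j y n - linePoint j y m)‖ₑ := by
        rw [tsum_eq_tsum_linePoint j]
        refine tsum_eq_single y fun z hz => ?_
        simp [phi_linePoint_sub_eq_zero hz]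
    _ ≤ ∑' m, ‖f (linePoint j y m)‖ₑ * (2 * (decay (n - m) : ℝ≥0∞) ^ 2) := by
        gcongr with m
        simpa using enorm_phi_le j (linePoint j y n - linePoint j y m)
    _ = 2 * ∑' m, ‖f (linePoint j y m)‖ₑ * (decay (n - m) : ℝ≥0∞) ^ 2 := by
        simp_rw [mul_left_comm _ (2 : ℝ≥0∞), ENNReal.tsum_mul_left]

theorem weakNorm_jap_mul_pd_linePoint_le (f : (Fin d → ℤ) → ℂ) (y : {i // i ≠ j} → ℤ) :
    weakNorm (fun n => ENNReal.ofReal (jap (linePoint j y n)) * ‖pd j f (linePoint j y n)‖ₑ) ≤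
      (12 * ∑' n, (decay n : ℝ≥0∞) ^ 2 + 8) *
        ∑' n, ‖f (linePoint j y n)‖ₑ * ENNReal.ofReal (jap (linePoint j y n)) := by
  set w : ℤ → ℝ≥0 := fun n => (jap (linePoint j y n)).toNNReal
  have hw_one (n : ℤ) : 1 ≤ w n := Real.one_le_toNNReal.2 (one_le_jap _)
  have hw (n : ℤ) : (w n : ℝ) = jap (linePoint j y n) :=
    Real.coe_toNNReal _ (zero_le_one.trans (one_le_jap _))
  have hw_norm (n : ℤ) : ‖n‖₊ ≤ w n := by
    rw [← NNReal.coe_le_coe, hw, coe_nnnorm, Int.norm_eq_abs]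
    simpa using abs_le_jap j (linePoint j y n)
  have hw_lip (n m : ℤ) : w n ≤ w m + ‖n - m‖₊ := by
    rw [← NNReal.coe_le_coe, NNReal.coe_add, hw, hw, coe_nnnorm, Int.norm_eq_abs]
    simpa using jap_le_jap_add_abs_sub (j := j) (x := linePoint j y n) (m := linePoint j y m)
      fun i hi => by rw [linePoint_of_ne _ _ hi, linePoint_of_ne _ _ hi]
  calc weakNorm (fun n => (w n : ℝ≥0∞) * ‖pd j f (linePoint j y n)‖ₑ)
      ≤ weakNorm (fun n => 2 *
          (w n * ∑' m, ‖f (linePoint j y m)‖ₑ * (decay (n - m) : ℝ≥0∞) ^ 2)) := by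
        refine weakNorm_mono fun n => ?_
        rw [mul_left_comm]
        gcongr
        exact enorm_pd_linePoint_le j f y n
    _ ≤ 2 * ((6 * ∑' n, (decay n : ℝ≥0∞) ^ 2 + 4) * ∑' m, ‖f (linePoint j y m)‖ₑ * w m) := by
        refine (weakNorm_const_mul_le _ _).trans ?_
        gcongr
        exact weakNorm_weight_mul_conv_decay_sq_le hw_one hw_norm hw_lip _
    _ = (12 * ∑' n, (decay n : ℝ≥0∞) ^ 2 + 8) * ∑' m, ‖f (linePoint j y m)‖ₑ * w m := by
        ring

theorem weakNorm_jap_mul_pd_le (f : (Fin d → ℤ) → ℂ) :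
    weakNorm (fun x => ENNReal.ofReal (jap x) * ‖pd j f x‖ₑ) ≤
      (12 * ∑' n, (decay n : ℝ≥0∞) ^ 2 + 8) * ∑' x, ‖f x‖ₑ * ENNReal.ofReal (jap x) := by
  refine (weakNorm_le_tsum_weakNorm_fiber (Equiv.funSplitAt j ℤ).symm _).trans ?_
  rw [tsum_eq_tsum_linePoint j, ← ENNReal.tsum_mul_left]
  exact ENNReal.tsum_le_tsum fun y => weakNorm_jap_mul_pd_linePoint_le j f y

theorem div_jap_le_norm_iff {α : ℝ} {x : Fin d → ℤ} {z : ℂ} :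
    α / jap x ≤ ‖z‖ ↔ ENNReal.ofReal α ≤ ENNReal.ofReal (jap x) * ‖z‖ₑ := by
  have hx : 0 < jap x := zero_lt_one.trans_le (one_le_jap x)
  rw [← ofReal_norm, ← ENNReal.ofReal_mul hx.le, ENNReal.ofReal_le_ofReal_iff (by positivity),
    div_le_iff₀' hx]

end Derivative

open scoped Classical in
theorem stmt6_general :
    ∃ C : ℝ≥0, 0 < C ∧
      ∀ (d : ℕ) (f : (Fin d → ℤ) → ℂ) (j : Fin d) (α : ℝ), 0 < α →
        ENNReal.ofReal α *
            (∑' x : Fin d → ℤ, if α / jap x ≤ ‖pd j f x‖ then (1 : ℝ≥0∞) else 0) ≤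
          (C : ℝ≥0∞) * ∑' m, (‖f m‖₊ : ℝ≥0∞) * ENNReal.ofReal (jap m) := by
  refine ⟨12 * (∑' n, (decay n : ℝ≥0∞) ^ 2).toNNReal + 8, by positivity, fun d f j α _ => ?_⟩
  push_cast
  rw [ENNReal.coe_toNNReal tsum_decay_sq_ne_top, ← encard_setOf_eq_tsum]
  simp_rw [div_jap_le_norm_iff]
  exact (mul_encard_le_weakNorm _ _).trans (weakNorm_jap_mul_pd_le j f)

open scoped Classical in
/-- weak `ℓ^{1,1}` bound for the discrete partial derivative:
`α · #{k : |∂ⱼf(k)| ≥ α/⟨k⟩} ≤ C‖f‖_{ℓ^{1,1}}` for all `α > 0`. -/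
theorem stmt6 (d : ℕ) (hd : 0 < d) :
    ∃ C : ℝ≥0, 0 < C ∧
      ∀ f : (Fin d → ℤ) → ℂ,
        (∑' m, (‖f m‖₊ : ℝ≥0∞) * ENNReal.ofReal (jap m)) < ⊤ →
        ∀ (j : Fin d) (α : ℝ), 0 < α →
          ENNReal.ofReal α *
              (∑' x : Fin d → ℤ, if α / jap x ≤ ‖pd j f x‖ then (1 : ℝ≥0∞) else 0) ≤
            (C : ℝ≥0∞) * ∑' m, (‖f m‖₊ : ℝ≥0∞) * ENNReal.ofReal (jap m) := by
  obtain ⟨C, hC, hbound⟩ := stmt6_general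
  exact ⟨C, hC, fun f _ => hbound d f⟩
end
end
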